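/- Let (R, m) be a Noetherian local Cohen–Macaulay ring of dimension n with residue field k, and Ω a finite R-module such that Ext^i_R(k, Ω) = 0 for i < n, Ext^n_R(k, Ω) ≅ k, and length_{R_P}(Ω_P) ≥ length_{R_P}(R_P) for every minimal prime P of R. Then Ω is a dualizing (canonical) module for R, i.e., Ext^i_R(k, Ω) = 0 for all i ≠ n. -/

import Mathlib

open CategoryTheory IsLocalRing

/-- The length of a module, as the Krull dimension of its lattice of submodules. -/
noncomputable def mlen (R M : Type) [Ring R] [AddCommGroup M] [Module R M] : WithBot ℕ∞ :=
  Order.krullDim (Submodule R M)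

/-- `extM R M N n` is `Ext^n_R(M, N)`. -/
noncomputable def extM (R : Type) [CommRing R] (M N : Type)
    [AddCommGroup M] [Module R M] [AddCommGroup N] [Module R N] (n : ℕ) : ModuleCat R :=
  ((Ext R (ModuleCat R) n).obj (Opposite.op (ModuleCat.of R M))).obj (ModuleCat.of R N)

/-- The length of the localization `M_P` over `R_P`. -/
noncomputable def locLen (R : Type) [CommRing R] (M : Type) [AddCommGroup M] [Module R M]
    (P : PrimeSpectrum R) : WithBot ℕ∞ :=
  mlen (Localization.AtPrime P.asIdeal) (LocalizedModule P.asIdeal.primeCompl M)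

/-!
`Ext^i(-, Ω)` is followed through `N = R / (x₁, …, x_j)` for a maximal `R`-regular sequence. If `x`
is `N`-regular and `Ext^i(N, Ω) = 0` for `i > j`, then `Ext^{j+1}(N/xN, Ω)` is the quotient of
`Ext^j(N, Ω)` by `x`. The hypothesis at the minimal primes says `ℓ(N_P) ≤ ℓ(Ext^j(N, Ω)_P)` for
`N = R` and `j = 0`, and it passes from `N` to `N/xN` because of the multiplicity formula
`ℓ(L_p/xL_p) - ℓ(0 :_{L_p} x) = ∑_Q ℓ(L_Q) ℓ((R/Q)_p/x(R/Q)_p)`, with `Q` running over the minimal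
primes of `N`.

At the end `N ≠ 0` has finite length, `ℓ(N) ≤ ℓ(Ext^n(N, Ω))` and `Ext^i(N, Ω) = 0` for `i > n`.
Dévissage gives `ℓ(Ext^n(K, Ω)) ≤ ℓ(K)` for every `K` of finite length, so counting lengths along
`0 → K → N → k → 0` forces `Ext^{n+1}(k, Ω) = 0`. Dévissage and the same exact sequence then carry
the vanishing from each degree to the next.
-/

universe u

section Length

variable {S : Type*} [Ring S]
  {A : Type*} [AddCommGroup A] [Module S A] {B : Type*} [AddCommGroup B] [Module S B]
  {C : Type*} [AddCommGroup C] [Module S C] {D : Type*} [AddCommGroup D] [Module S D]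
  {E : Type*} [AddCommGroup E] [Module S E] {F : Type*} [AddCommGroup F] [Module S F]

lemma length_eq_length_ker_add_length_range (f : A →ₗ[S] B) :
    Module.length S A =
      Module.length S (LinearMap.ker f) + Module.length S (LinearMap.range f) :=
  Module.length_eq_add_of_exact (LinearMap.ker f).subtype f.rangeRestrict
    (Submodule.subtype_injective _) f.surjective_rangeRestrict
    fun x => by simp [← LinearMap.mem_ker]

lemma length_eq_length_range_add_length_range {f : A →ₗ[S] B} {g : B →ₗ[S] C}
    (h : Function.Exact f g) :
    Module.length S B =
      Module.length S (LinearMap.range f) + Module.length S (LinearMap.range g) := by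
  rw [length_eq_length_ker_add_length_range g, h.linearMap_ker_eq]

lemma length_range_eq_of_injective {f : A →ₗ[S] B} (hf : Function.Injective f) :
    Module.length S (LinearMap.range f) = Module.length S A :=
  (LinearEquiv.ofInjective f hf).length_eq.symm

lemma length_range_eq_of_surjective {f : A →ₗ[S] B} (hf : Function.Surjective f) :
    Module.length S (LinearMap.range f) = Module.length S B := by
  rw [LinearMap.range_eq_top.2 hf, Module.length_top]

lemma length_le_add_of_exact {f : A →ₗ[S] B} {g : B →ₗ[S] C} (h : Function.Exact f g) :
    Module.length S B ≤ Module.length S A + Module.length S C := by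
  rw [length_eq_length_range_add_length_range h]
  exact add_le_add (Module.length_le_of_surjective _ f.surjective_rangeRestrict)
    (Module.length_le_of_injective _ (Submodule.subtype_injective _))

lemma length_add_length_le_of_exact {f : A →ₗ[S] B} {g : B →ₗ[S] C} {h : C →ₗ[S] D}
    (hfg : Function.Exact f g) (hgh : Function.Exact g h) (hh : Function.Surjective h) :
    Module.length S B + Module.length S D ≤ Module.length S A + Module.length S C := by
  rw [length_eq_length_range_add_length_range hfg, length_eq_length_range_add_length_range hgh,
    length_range_eq_of_surjective hh, add_assoc]
  gcongr
  exact Module.length_le_of_surjective _ f.surjective_rangeRestrict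

lemma length_alternating_sum_eq_of_exact {f₁ : A →ₗ[S] B} {f₂ : B →ₗ[S] C} {f₃ : C →ₗ[S] D}
    {f₄ : D →ₗ[S] E} {f₅ : E →ₗ[S] F} (hf₁ : Function.Injective f₁) (h₁ : Function.Exact f₁ f₂)
    (h₂ : Function.Exact f₂ f₃) (h₃ : Function.Exact f₃ f₄) (h₄ : Function.Exact f₄ f₅)
    (hf₅ : Function.Surjective f₅) :
    Module.length S A + Module.length S C + Module.length S E =
      Module.length S B + Module.length S D + Module.length S F := by
  rw [length_eq_length_range_add_length_range h₁, length_eq_length_range_add_length_range h₂,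
    length_eq_length_range_add_length_range h₃, length_eq_length_range_add_length_range h₄,
    length_range_eq_of_injective hf₁, length_range_eq_of_surjective hf₅]
  abel

end Length

section DerivedFunctorExt

variable {R : Type u} [CommRing R] {X Y : ModuleCat.{u} R} (P : ProjectiveResolution X)

lemma extMk_zero_eq_zero_iff (f : P.complex.X 0 ⟶ Y) (hf : P.complex.d 1 0 ≫ f = 0) :
    P.extMk f 1 rfl hf = 0 ↔ f = 0 := by
  refine ⟨fun h => ?_, fun h => by simp [h]⟩
  rw [← P.extEquivCohomologyClass.apply_eq_iff_eq,
    ProjectiveResolution.extEquivCohomologyClass_extMk,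
    ProjectiveResolution.extEquivCohomologyClass_zero,
    CochainComplex.HomComplex.CohomologyClass.mk_eq_zero_iff,
    CochainComplex.HomComplex.Cocycle.toSingleMk_mem_coboundaries_iff _ _ _ _ _ 1 (by simp)] at h
  obtain ⟨g, hg⟩ := h
  have hzero : Limits.IsZero (P.cochainComplex.X 1) :=
    CochainComplex.isZero_of_isStrictlyLE P.cochainComplex 0 1
  rw [hzero.eq_of_src g 0, Limits.comp_zero] at hg
  rw [← cancel_epi (P.cochainComplexXIso (-(0 : ℕ)) 0 rfl).hom, ← hg, Limits.comp_zero]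

lemma extMk_smul {n : ℕ} (r : R) (f : P.complex.X n ⟶ Y) (hf : P.complex.d (n + 1) n ≫ f = 0) :
    P.extMk (r • f) (n + 1) rfl (by rw [Linear.comp_smul, hf, smul_zero]) =
      r • P.extMk f (n + 1) rfl hf := by
  rw [Abelian.Ext.smul_eq_comp_mk₀, ProjectiveResolution.extMk_comp_mk₀]
  congr 1

/-- The map sending an `n`-cocycle of `Hom(P, Y)`, for `P` a projective resolution of `X`, to its
class in `Abelian.Ext X Y n`. The index `n - 1` is truncated: for `n = 0` it refers to the
differential from degree `0` to itself, which is zero. -/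
noncomputable def cocycleToExt (n : ℕ) :
    LinearMap.ker ((P.complex.linearYonedaObj R Y).sc' (n - 1) n (n + 1)).g.hom →ₗ[R]
      Abelian.Ext X Y n where
  toFun f := P.extMk (Y := Y) (n := n) f.1 (n + 1) rfl f.2
  map_add' _ _ := (P.add_extMk _ _ _ _ _ _).symm
  map_smul' r f := extMk_smul P r (show P.complex.X n ⟶ Y from f.1) f.2

lemma cocycleToExt_surjective (n : ℕ) : Function.Surjective (cocycleToExt (Y := Y) P n) := by
  intro a
  obtain ⟨f, hf, rfl⟩ := P.extMk_surjective a (n + 1) rfl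
  exact ⟨⟨f, hf⟩, rfl⟩

lemma range_toCycles_eq_ker_cocycleToExt (n : ℕ) :
    LinearMap.range
        ((P.complex.linearYonedaObj R Y).sc' (n - 1) n (n + 1)).moduleCatToCycles =
      LinearMap.ker (cocycleToExt (Y := Y) P n) := by
  ext ⟨f, hf⟩
  rw [LinearMap.mem_ker]
  rcases n with _ | n
  · refine Iff.trans ⟨?_, fun h => ?_⟩
      (extMk_zero_eq_zero_iff P (show P.complex.X 0 ⟶ Y from f) hf).symm
    · rintro ⟨g, hg⟩
      have hfg : P.complex.d 0 0 ≫ (show P.complex.X 0 ⟶ Y from g) = f := congrArg Subtype.val hg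
      rw [← hfg, P.complex.shape _ _ (by simp), Limits.zero_comp]
    · exact ⟨0, by rw [map_zero]; exact Subtype.ext h.symm⟩
  · refine Iff.trans ⟨?_, ?_⟩
      (P.extMk_eq_zero_iff (show P.complex.X (n + 1) ⟶ Y from f) _ rfl hf n rfl).symm
    · exact fun ⟨g, hg⟩ => ⟨g, congrArg Subtype.val hg⟩
    · exact fun ⟨g, hg⟩ => ⟨g, Subtype.ext hg⟩

/-- The comparison between `Ext` as a derived functor and `Ext` as a group of morphisms in
the derived category, both computed by a projective resolution. -/
noncomputable def derivedExtEquiv (X Y : ModuleCat.{u} R) (n : ℕ) :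
    ((Ext R (ModuleCat.{u} R) n).obj (Opposite.op X)).obj Y ≃ₗ[R] Abelian.Ext X Y n :=
  let P := ProjectiveResolution.of X
  (P.isoExt n Y).toLinearEquiv ≪≫ₗ
    ((P.complex.linearYonedaObj R Y).homologyIsoSc' (n - 1) n (n + 1)
      (by cases n <;> simp) (by simp)).toLinearEquiv ≪≫ₗ
    (ShortComplex.moduleCatHomologyIso _).toLinearEquiv ≪≫ₗ
    Submodule.quotEquivOfEq _ _ (range_toCycles_eq_ker_cocycleToExt P n) ≪≫ₗ
    (cocycleToExt (Y := Y) P n).quotKerEquivOfSurjective (cocycleToExt_surjective P n)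

end DerivedFunctorExt

section ExtExactSequence

variable {C : Type*} [Category* C] [Abelian C] [HasExt C] {S : ShortComplex C}

lemma exact_ext_precomp₁ (hS : S.ShortExact) (R : Type*) [CommRing R] [Linear R C] (Y : C)
    (n : ℕ) :
    Function.Exact ((Abelian.Ext.mk₀ S.f).precompOfLinear R Y (zero_add n))
      (hS.extClass.precompOfLinear R Y (add_comm 1 n)) :=
  (ShortComplex.ab_exact_iff_function_exact _).1
    (Abelian.Ext.contravariant_sequence_exact₁' hS Y n (n + 1) (add_comm 1 n))

lemma exact_ext_precomp₂ (hS : S.ShortExact) (R : Type*) [CommRing R] [Linear R C] (Y : C)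
    (n : ℕ) :
    Function.Exact ((Abelian.Ext.mk₀ S.g).precompOfLinear R Y (zero_add n))
      ((Abelian.Ext.mk₀ S.f).precompOfLinear R Y (zero_add n)) :=
  (ShortComplex.ab_exact_iff_function_exact _).1
    (Abelian.Ext.contravariant_sequence_exact₂' hS Y n)

lemma extClass_precomp_surjective (hS : S.ShortExact) (R : Type*) [CommRing R] [Linear R C]
    (Y : C) (n : ℕ) [Subsingleton (Abelian.Ext S.X₂ Y (n + 1))] :
    Function.Surjective (hS.extClass.precompOfLinear R Y (add_comm 1 n)) := fun b =>
  Abelian.Ext.contravariant_sequence_exact₃ hS Y b (Subsingleton.elim _ _) (add_comm 1 n)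

lemma subsingleton_ext_succ_of_shortExact (hS : S.ShortExact) (Y : C) (n : ℕ)
    [Subsingleton (Abelian.Ext S.X₁ Y n)] [Subsingleton (Abelian.Ext S.X₂ Y (n + 1))] :
    Subsingleton (Abelian.Ext S.X₃ Y (n + 1)) := by
  refine subsingleton_of_forall_eq 0 fun b => ?_
  obtain ⟨a, rfl⟩ :=
    Abelian.Ext.contravariant_sequence_exact₃ hS Y b (Subsingleton.elim _ _) (add_comm 1 n)
  rw [Subsingleton.elim a 0, Abelian.Ext.comp_zero]

end ExtExactSequence

section ExtModule

open scoped Pointwise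

variable {R : Type u} [CommRing R]

lemma subsingleton_ext_quotSMulTop {X Y : ModuleCat.{u} R} {x : R} (hx : IsSMulRegular X x)
    {j : ℕ} (hX : ∀ i, j < i → Subsingleton (Abelian.Ext X Y i)) (i : ℕ) (hi : j + 1 < i) :
    Subsingleton (Abelian.Ext (ModuleCat.of R (QuotSMulTop x X)) Y i) := by
  obtain ⟨i, rfl⟩ := Nat.exists_eq_add_of_lt (Nat.lt_of_succ_lt hi)
  have : Subsingleton (Abelian.Ext (X.smulShortComplex x).X₁ Y (j + i)) := hX _ (by omega)
  have : Subsingleton (Abelian.Ext (X.smulShortComplex x).X₂ Y (j + i + 1)) := hX _ (by omega)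
  exact subsingleton_ext_succ_of_shortExact hx.smulShortComplex_shortExact Y (j + i)

lemma exact_lsmul_extClass {X : ModuleCat.{u} R} (Y : ModuleCat.{u} R) {x : R}
    (hx : IsSMulRegular X x) (n : ℕ) :
    Function.Exact (LinearMap.lsmul R (Abelian.Ext X Y n) x)
      (hx.smulShortComplex_shortExact.extClass.precompOfLinear R Y (add_comm 1 n)) := by
  have hmul (a : Abelian.Ext X Y n) :
      (Abelian.Ext.mk₀ (x • 𝟙 X)).comp a (zero_add n) = x • a := by
    rw [Abelian.Ext.mk₀_smul, Abelian.Ext.smul_comp, Abelian.Ext.mk₀_id_comp]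
  refine fun a => (exact_ext_precomp₁ hx.smulShortComplex_shortExact R Y n a).trans ?_
  exact exists_congr fun b => Eq.congr_left (hmul b)

lemma nonempty_ext_quotSMulTop_equiv {X Y : ModuleCat.{u} R} {x : R} (hx : IsSMulRegular X x)
    (j : ℕ) (hX : Subsingleton (Abelian.Ext X Y (j + 1))) :
    Nonempty (QuotSMulTop x (Abelian.Ext X Y j) ≃ₗ[R]
      Abelian.Ext (ModuleCat.of R (QuotSMulTop x X)) Y (j + 1)) :=
  have : Subsingleton (Abelian.Ext (X.smulShortComplex x).X₂ Y (j + 1)) := hX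
  ⟨Submodule.quotEquivOfEq _ _ ((LinearMap.range_eq_map _).symm.trans
      (exact_lsmul_extClass Y hx j).linearMap_ker_eq.symm) ≪≫ₗ
    LinearMap.quotKerEquivOfSurjective _
      (extClass_precomp_surjective hx.smulShortComplex_shortExact R Y j)⟩

lemma annihilator_le_annihilator_ext (X Y : ModuleCat.{u} R) (n : ℕ) :
    Module.annihilator R X ≤ Module.annihilator R (Abelian.Ext X Y n) := by
  refine fun r hr => Module.mem_annihilator.2 fun a => ?_
  have hzero : r • 𝟙 X = 0 := by
    ext m
    exact Module.mem_annihilator.1 hr m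
  rw [← Abelian.Ext.mk₀_id_comp a, ← Abelian.Ext.smul_comp, ← Abelian.Ext.mk₀_smul, hzero,
    Abelian.Ext.mk₀_zero, Abelian.Ext.zero_comp]

/-- `Ext⁰(R, Y) = Y`. -/
noncomputable def extSelfEquiv (Y : ModuleCat.{u} R) :
    Abelian.Ext (ModuleCat.of R R) Y 0 ≃ₗ[R] Y :=
  Abelian.Ext.linearEquiv₀ ≪≫ₗ ModuleCat.homLinearEquiv (S := R) ≪≫ₗ
    LinearMap.ringLmapEquivSelf R R Y

lemma subsingleton_ext_self (Y : ModuleCat.{u} R) {i : ℕ} (hi : 0 < i) :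
    Subsingleton (Abelian.Ext (ModuleCat.of R R) Y i) := by
  obtain ⟨i, rfl⟩ := Nat.exists_eq_succ_of_ne_zero hi.ne'
  have : Projective (ModuleCat.of R R) :=
    ModuleCat.projective_of_free (Module.Basis.singleton Unit R)
  exact subsingleton_of_forall_eq 0 fun b => b.eq_zero_of_projective

end ExtModule

section Devissage

variable {R : Type u} [CommRing R] [IsLocalRing R]

lemma exists_surjective_residueField_ker_eq {N : Type*} [AddCommGroup N] [Module R N]
    (K : Submodule R N) [IsSimpleModule R (N ⧸ K)] :
    ∃ f : N →ₗ[R] ResidueField R, Function.Surjective f ∧ LinearMap.ker f = K := by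
  obtain ⟨m, hm, ⟨e⟩⟩ := isSimpleModule_iff_quot_maximal.1 ‹IsSimpleModule R (N ⧸ K)›
  obtain rfl := eq_maximalIdeal hm
  have hker : LinearMap.ker (e.toLinearMap ∘ₗ K.mkQ) = K := by
    rw [LinearEquiv.ker_comp, Submodule.ker_mkQ]
  exact ⟨_, e.surjective.comp K.mkQ_surjective, hker⟩

lemma exists_surjective_residueField (N : Type*) [AddCommGroup N] [Module R N] [Nontrivial N]
    [Module.Finite R N] : ∃ f : N →ₗ[R] ResidueField R, Function.Surjective f := by
  obtain ⟨K, hK⟩ := IsCoatomic.exists_coatom (Submodule R N)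
  have : IsSimpleModule R (N ⧸ K) := isSimpleModule_iff_isCoatom.2 hK
  obtain ⟨f, hf, -⟩ := exists_surjective_residueField_ker_eq K
  exact ⟨f, hf⟩

lemma length_residueField : Module.length R (ResidueField R) = 1 :=
  have : IsSimpleModule R (R ⧸ maximalIdeal R) :=
    isSimpleModule_iff_quot_maximal.2 ⟨_, maximalIdeal.isMaximal R, ⟨.refl R _⟩⟩
  Module.length_eq_one R (R ⧸ maximalIdeal R)

lemma length_eq_length_ker_add_one {N : Type*} [AddCommGroup N] [Module R N]
    {f : N →ₗ[R] ResidueField R} (hf : Function.Surjective f) :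
    Module.length R N = Module.length R (LinearMap.ker f) + 1 := by
  rw [length_eq_length_ker_add_length_range f, length_range_eq_of_surjective hf,
    length_residueField]

variable {Y : ModuleCat.{u} R}

lemma length_ext_le_length_mul (n : ℕ) {X : Type u} [AddCommGroup X] [Module R X]
    (hX : IsFiniteLength R X) :
    Module.length R (Abelian.Ext (ModuleCat.of R X) Y n) ≤
      Module.length R X *
        Module.length R (Abelian.Ext (ModuleCat.of R (ResidueField R)) Y n) := by
  induction hX with
  | @of_subsingleton X =>
    have hzero : Limits.IsZero (ModuleCat.of R X) := ModuleCat.isZero_of_subsingleton _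
    have : Subsingleton (Abelian.Ext (ModuleCat.of R X) Y n) :=
      subsingleton_of_forall_eq 0 fun a => by
        rw [← Abelian.Ext.mk₀_id_comp a, hzero.eq_zero_of_src (𝟙 _), Abelian.Ext.mk₀_zero,
          Abelian.Ext.zero_comp]
    simp
  | @of_simple_quotient X _ _ K _ _ ih =>
    obtain ⟨f, hf, rfl⟩ := exists_surjective_residueField_ker_eq K
    have hexact := exact_ext_precomp₂ (LinearMap.shortExact_shortComplexKer hf) R Y n
    rw [length_eq_length_ker_add_one hf, add_comm, add_mul, one_mul]
    exact (length_le_add_of_exact hexact).trans (add_le_add_right ih _)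

section FiniteLength

variable {n : ℕ} {N : Type u} [AddCommGroup N] [Module R N] [Nontrivial N]
  (hN : IsFiniteLength R N)

include hN

lemma subsingleton_ext_residueField_succ
    (hk : Module.length R (Abelian.Ext (ModuleCat.of R (ResidueField R)) Y n) ≤ 1)
    [Subsingleton (Abelian.Ext (ModuleCat.of R N) Y (n + 1))]
    (hlen : Module.length R N ≤ Module.length R (Abelian.Ext (ModuleCat.of R N) Y n)) :
    Subsingleton (Abelian.Ext (ModuleCat.of R (ResidueField R)) Y (n + 1)) := by
  have : IsNoetherian R N := (isFiniteLength_iff_isNoetherian_isArtinian.1 hN).1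
  obtain ⟨f, hf⟩ := exists_surjective_residueField (R := R) N
  have hS := LinearMap.shortExact_shortComplexKer hf
  have hker : Module.length R (Abelian.Ext (ModuleCat.of R (LinearMap.ker f)) Y n) ≤
      Module.length R (LinearMap.ker f) :=
    (length_ext_le_length_mul n (hN.of_injective (Submodule.subtype_injective _))).trans
      (mul_le_of_le_one_right' hk)
  have hcount := length_add_length_le_of_exact (exact_ext_precomp₂ hS R Y n)
    (exact_ext_precomp₁ hS R Y n) (extClass_precomp_surjective hS R Y n)
  rw [← Module.length_eq_zero_iff (R := R), ← nonpos_iff_eq_zero,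
    ← ENat.add_le_add_iff_left (Module.length_ne_top_iff.2 hN), add_zero]
  calc _ ≤ _ := add_le_add_left hlen _
    _ ≤ _ := hcount
    _ ≤ 1 + Module.length R (LinearMap.ker f) := add_le_add hk hker
    _ = Module.length R N := by
      rw [length_eq_length_ker_add_one hf, add_comm]

lemma subsingleton_ext_residueField_of_succ
    (hk : Subsingleton (Abelian.Ext (ModuleCat.of R (ResidueField R)) Y (n + 1)))
    (hNY : ∀ i, n < i → Subsingleton (Abelian.Ext (ModuleCat.of R N) Y i)) (i : ℕ) (hi : n < i) :
    Subsingleton (Abelian.Ext (ModuleCat.of R (ResidueField R)) Y i) := by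
  have : IsNoetherian R N := (isFiniteLength_iff_isNoetherian_isArtinian.1 hN).1
  obtain ⟨f, hf⟩ := exists_surjective_residueField (R := R) N
  induction i, hi using Nat.le_induction with
  | base => exact hk
  | succ i hi ih =>
    have hker : Subsingleton (Abelian.Ext (ModuleCat.of R (LinearMap.ker f)) Y i) := by
      rw [← Module.length_eq_zero_iff (R := R), ← nonpos_iff_eq_zero]
      refine (length_ext_le_length_mul i
        (hN.of_injective (Submodule.subtype_injective _))).trans ?_
      rw [Module.length_eq_zero (M := Abelian.Ext _ _ _), mul_zero]
    have : Subsingleton (Abelian.Ext (ModuleCat.of R N) Y (i + 1)) := hNY _ (by omega)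
    exact subsingleton_ext_succ_of_shortExact (LinearMap.shortExact_shortComplexKer hf) Y i

end FiniteLength

end Devissage

section TorsionBy

variable {R : Type*} [CommRing R] (x : R)
  {A : Type*} [AddCommGroup A] [Module R A] {B : Type*} [AddCommGroup B] [Module R B]
  {C : Type*} [AddCommGroup C] [Module R C]

/-- The functoriality in `A` of the submodule of elements of `A` killed by `x`. -/
def torsionByMap (f : A →ₗ[R] B) : Submodule.torsionBy R A x →ₗ[R] Submodule.torsionBy R B x :=
  f.restrict fun a ha => by
    rw [Submodule.mem_torsionBy_iff] at ha ⊢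
    rw [← map_smul, ha, map_zero]

variable {f : A →ₗ[R] B} {g : B →ₗ[R] C}

lemma torsionByMap_injective (hf : Function.Injective f) :
    Function.Injective (torsionByMap x f) := fun _ _ h =>
  Subtype.ext (hf (congrArg Subtype.val h))

lemma torsionByMap_exact (hf : Function.Injective f) (h : Function.Exact f g) :
    Function.Exact (torsionByMap x f) (torsionByMap x g) := by
  rintro ⟨b, hb⟩
  refine ⟨fun hgb => ?_, ?_⟩
  · obtain ⟨a, rfl⟩ := (h b).1 (congrArg Subtype.val hgb)
    refine ⟨⟨a, hf ?_⟩, rfl⟩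
    rw [map_zero, ← hb]
    exact map_smul f x a
  · rintro ⟨a, ha⟩
    rw [← ha]
    exact Subtype.ext (h.apply_apply_eq_zero a.1)

variable (A) in
lemma exact_torsionBy_lsmul :
    Function.Exact (Submodule.torsionBy R A x).subtype (LinearMap.lsmul R A x) :=
  LinearMap.exact_subtype_ker_map (LinearMap.lsmul R A x)

lemma exists_exact_torsionByMap_quotSMulTopMap (hf : Function.Injective f)
    (hg : Function.Surjective g) (h : Function.Exact f g) :
    ∃ δ : Submodule.torsionBy R C x →ₗ[R] QuotSMulTop x A,
      Function.Exact (torsionByMap x g) δ ∧ Function.Exact δ (QuotSMulTop.map x f) := by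
  refine ⟨SnakeLemma.δ' (LinearMap.lsmul R A x) (LinearMap.lsmul R B x) (LinearMap.lsmul R C x)
      f g h f g h (by ext; simp) (by ext; simp) _ (exact_torsionBy_lsmul x C) _
      (LinearMap.exact_lsmul_mkQ_smul_top A x) hg hf, ?_, ?_⟩
  · apply SnakeLemma.exact_δ'_right (hι₂ := exact_torsionBy_lsmul x B)
    exacts [rfl, Submodule.subtype_injective _]
  · apply SnakeLemma.exact_δ'_left (hπ₂ := LinearMap.exact_lsmul_mkQ_smul_top B x)
    exacts [rfl, Submodule.mkQ_surjective _]

end TorsionBy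

section LengthAt

variable {R : Type*} [CommRing R] (p : PrimeSpectrum R)
  {A : Type*} [AddCommGroup A] [Module R A] {B : Type*} [AddCommGroup B] [Module R B]
  {C : Type*} [AddCommGroup C] [Module R C]

lemma exact_localizedModuleMap (S : Submonoid R) {f : A →ₗ[R] B} {g : B →ₗ[R] C}
    (h : Function.Exact f g) :
    Function.Exact (LocalizedModule.map S f) (LocalizedModule.map S g) :=
  LocalizedModule.map_exact S f g h

/-- The length of the localization `L_p` over `R_p`, in any universe. It takes values in `ℕ∞`, so
that it is additive on exact sequences without a case distinction at the `⊥` of `locLen`. -/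
noncomputable def lengthAt (L : Type*) [AddCommGroup L] [Module R L] : ℕ∞ :=
  Module.length (Localization.AtPrime p.asIdeal) (LocalizedModule p.asIdeal.primeCompl L)

variable {p}

lemma lengthAt_le_of_injective {f : A →ₗ[R] B} (hf : Function.Injective f) :
    lengthAt p A ≤ lengthAt p B :=
  Module.length_le_of_injective _ (LocalizedModule.map_injective p.asIdeal.primeCompl f hf)

lemma lengthAt_le_of_surjective {f : A →ₗ[R] B} (hf : Function.Surjective f) :
    lengthAt p B ≤ lengthAt p A :=
  Module.length_le_of_surjective _ (LocalizedModule.map_surjective p.asIdeal.primeCompl f hf)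

lemma lengthAt_congr (e : A ≃ₗ[R] B) : lengthAt p A = lengthAt p B :=
  le_antisymm (lengthAt_le_of_injective (f := e.toLinearMap) e.injective)
    (lengthAt_le_of_surjective (f := e.toLinearMap) e.surjective)

lemma lengthAt_eq_add_of_exact {f : A →ₗ[R] B} {g : B →ₗ[R] C} (hf : Function.Injective f)
    (hg : Function.Surjective g) (h : Function.Exact f g) :
    lengthAt p B = lengthAt p A + lengthAt p C :=
  Module.length_eq_add_of_exact (LocalizedModule.map p.asIdeal.primeCompl f)
    (LocalizedModule.map p.asIdeal.primeCompl g) (LocalizedModule.map_injective _ f hf)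
    (LocalizedModule.map_surjective _ g hg) (exact_localizedModuleMap _ h)

lemma lengthAt_eq_zero_of_notMem_support (h : p ∉ Module.support R A) : lengthAt p A = 0 :=
  Module.length_eq_zero_iff.2 (Module.notMem_support_iff.1 h)

lemma lengthAt_eq_zero_of_subsingleton [Subsingleton A] : lengthAt p A = 0 :=
  lengthAt_eq_zero_of_notMem_support (by simp [Module.support_eq_empty])

lemma isSimpleModule_localizedModule_quotient (p : PrimeSpectrum R) :
    IsSimpleModule (Localization.AtPrime p.asIdeal)
      (LocalizedModule p.asIdeal.primeCompl (R ⧸ p.asIdeal)) := by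
  rw [isSimpleModule_iff_toSpanSingleton_surjective]
  refine ⟨Module.mem_support_iff.1 (by simp [Module.support_of_algebra]), fun m hm y => ?_⟩
  induction m using LocalizedModule.induction_on with | h m s
  induction y using LocalizedModule.induction_on with | h y t
  obtain ⟨r, rfl⟩ := Ideal.Quotient.mk_surjective m
  obtain ⟨u, rfl⟩ := Ideal.Quotient.mk_surjective y
  have hr : r ∉ p.asIdeal := by
    refine fun hr => hm ?_
    rw [Ideal.Quotient.eq_zero_iff_mem.2 hr, LocalizedModule.zero_mk]
  refine ⟨Localization.mk (u * s) (⟨r, hr⟩ * t), ?_⟩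
  rw [LinearMap.toSpanSingleton_apply, LocalizedModule.mk_smul_mk, LocalizedModule.mk_eq]
  refine ⟨1, ?_⟩
  simp only [one_smul, Submonoid.smul_def, Submonoid.coe_mul, ← Ideal.Quotient.mk_eq_mk,
    ← Submodule.Quotient.mk_smul, smul_eq_mul]
  congr 1
  ring

lemma lengthAt_quotient_self (p : PrimeSpectrum R) : lengthAt p (R ⧸ p.asIdeal) = 1 :=
  Module.length_eq_one_iff.2 (isSimpleModule_localizedModule_quotient p)

lemma lengthAt_quotient_eq_zero {q : PrimeSpectrum R} (h : ¬ q ≤ p) :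
    lengthAt p (R ⧸ q.asIdeal) = 0 :=
  lengthAt_eq_zero_of_notMem_support (by simpa [Module.support_of_algebra] using h)

variable (p) (x : R)

lemma lengthAt_torsionBy_le_add {f : A →ₗ[R] B} {g : B →ₗ[R] C} (hf : Function.Injective f)
    (h : Function.Exact f g) :
    lengthAt p (Submodule.torsionBy R B x) ≤
      lengthAt p (Submodule.torsionBy R A x) + lengthAt p (Submodule.torsionBy R C x) :=
  length_le_add_of_exact (exact_localizedModuleMap p.asIdeal.primeCompl (torsionByMap_exact x hf h))

lemma lengthAt_quotSMulTop_add_of_exact {f : A →ₗ[R] B} {g : B →ₗ[R] C}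
    (hf : Function.Injective f) (hg : Function.Surjective g) (h : Function.Exact f g) :
    lengthAt p (Submodule.torsionBy R A x) + lengthAt p (Submodule.torsionBy R C x) +
        lengthAt p (QuotSMulTop x B) =
      lengthAt p (Submodule.torsionBy R B x) + lengthAt p (QuotSMulTop x A) +
        lengthAt p (QuotSMulTop x C) := by
  obtain ⟨δ, hδ, hδ'⟩ := exists_exact_torsionByMap_quotSMulTopMap x hf hg h
  exact length_alternating_sum_eq_of_exact
    (LocalizedModule.map_injective _ _ (torsionByMap_injective x hf))
    (exact_localizedModuleMap p.asIdeal.primeCompl (torsionByMap_exact x hf h))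
    (exact_localizedModuleMap _ hδ) (exact_localizedModuleMap _ hδ')
    (exact_localizedModuleMap _ (QuotSMulTop.map_exact x h hg))
    (LocalizedModule.map_surjective _ _ (QuotSMulTop.map_surjective x hg))

variable {x}

lemma lengthAt_torsionBy_of_mem_annihilator (hx : x ∈ Module.annihilator R A) :
    lengthAt p (Submodule.torsionBy R A x) = lengthAt p A := by
  have htop : Submodule.torsionBy R A x = ⊤ :=
    eq_top_iff.2 fun a _ => Module.mem_annihilator.1 hx a
  exact lengthAt_congr (LinearEquiv.ofTop _ htop)

open scoped Pointwise in
lemma lengthAt_quotSMulTop_of_mem_annihilator (hx : x ∈ Module.annihilator R A) :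
    lengthAt p (QuotSMulTop x A) = lengthAt p A := by
  have hbot : x • (⊤ : Submodule R A) = ⊥ := by
    rw [eq_bot_iff]
    rintro _ ⟨a, -, rfl⟩
    exact Module.mem_annihilator.1 hx a
  exact lengthAt_congr (Submodule.quotEquivOfEqBot _ hbot)

lemma lengthAt_torsionBy_of_isSMulRegular (hx : IsSMulRegular A x) :
    lengthAt p (Submodule.torsionBy R A x) = 0 := by
  have : Subsingleton (Submodule.torsionBy R A x) :=
    Submodule.subsingleton_iff_eq_bot.2 (LinearMap.ker_eq_bot.2 hx)
  exact lengthAt_eq_zero_of_subsingleton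

end LengthAt

section MultiplicityFormula

variable {R : Type*} [CommRing R] {I : Ideal R} {x : R} {p : PrimeSpectrum R}
  {S : Finset (PrimeSpectrum R)} {L : Type*} [AddCommGroup L] [Module R L]

/-- The multiplicity `ℓ(L_p / x L_p) - ℓ(0 :_{L_p} x)` of `x` on `L_p` is the sum over `Q ∈ S` of
its multiplicities on `(R ⧸ Q)_p`, weighted by the lengths of `L_Q`. As lengths live in `ℕ∞`, the
subtraction is avoided and finiteness of the subtracted term is part of the notion; the
multiplicity on `(R ⧸ Q)_p` has no correction term because `x ∉ Q` in the intended use. -/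
structure MultiplicityFormula (p : PrimeSpectrum R) (x : R) (S : Finset (PrimeSpectrum R))
    (L : Type*) [AddCommGroup L] [Module R L] : Prop where
  lengthAt_torsionBy_lt_top : lengthAt p (Submodule.torsionBy R L x) < ⊤
  lengthAt_quotSMulTop_eq : lengthAt p (QuotSMulTop x L) =
    lengthAt p (Submodule.torsionBy R L x) +
      ∑ Q ∈ S, lengthAt Q L * lengthAt p (QuotSMulTop x (R ⧸ Q.asIdeal))

lemma lengthAt_eq_zero_of_quotient_equiv {q : PrimeSpectrum R} (e : L ≃ₗ[R] R ⧸ q.asIdeal)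
    (hqp : ¬ q ≤ p) : lengthAt p L = 0 := by
  rw [lengthAt_congr e, lengthAt_quotient_eq_zero hqp]

lemma le_asIdeal_of_support_subset_zeroLocus {q : PrimeSpectrum R} (e : L ≃ₗ[R] R ⧸ q.asIdeal)
    (hL : Module.support R L ⊆ PrimeSpectrum.zeroLocus I) : I ≤ q.asIdeal :=
  hL (by simp [e.support_eq, Module.support_of_algebra])

lemma eq_of_le_of_mem_minimalPrimes {q Q : PrimeSpectrum R} (hIq : I ≤ q.asIdeal)
    (hQ : Q.asIdeal ∈ I.minimalPrimes) (hqQ : q ≤ Q) : q = Q :=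
  le_antisymm hqQ (hQ.2 ⟨q.2, hIq⟩ hqQ)

lemma mem_minimalPrimes_of_lt_of_mem_minimalPrimes_span_insert [IsNoetherianRing R]
    {q : PrimeSpectrum R} (hp : p.asIdeal ∈ (Ideal.span (insert x (I : Set R))).minimalPrimes)
    (hIq : I ≤ q.asIdeal) (hqp : q < p) : q.asIdeal ∈ I.minimalPrimes := by
  have h := Ideal.mem_minimalPrimes_span_of_mem_minimalPrimes_span_insert (q := q.asIdeal)
    hqp x I hp I hIq ((Set.subset_insert x _).trans (Ideal.subset_span.trans Ideal.le_radical))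
  rwa [Ideal.span_eq] at h

lemma multiplicityFormula_of_mem {q : PrimeSpectrum R} (e : L ≃ₗ[R] R ⧸ q.asIdeal)
    (hxq : x ∈ q.asIdeal) (hL : Module.support R L ⊆ PrimeSpectrum.zeroLocus I)
    (hp : p.asIdeal ∈ (Ideal.span (insert x (I : Set R))).minimalPrimes)
    (hx : ∀ Q ∈ S, x ∉ Q.asIdeal) :
    MultiplicityFormula p x S L := by
  have hxL : x ∈ Module.annihilator R L := by rwa [e.annihilator_eq, Ideal.annihilator_quotient]
  have hsum : ∑ Q ∈ S, lengthAt Q L * lengthAt p (QuotSMulTop x (R ⧸ Q.asIdeal)) = 0 :=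
    Finset.sum_eq_zero fun Q hQ => by
      rw [lengthAt_eq_zero_of_quotient_equiv e fun h => hx Q hQ (h hxq), zero_mul]
  have htor := lengthAt_torsionBy_of_mem_annihilator p hxL
  refine ⟨?_, by rw [hsum, add_zero, htor, lengthAt_quotSMulTop_of_mem_annihilator p hxL]⟩
  rw [htor]
  by_cases hqp : q ≤ p
  · have hle : Ideal.span (insert x (I : Set R)) ≤ q.asIdeal :=
      Ideal.span_le.2 (Set.insert_subset hxq (le_asIdeal_of_support_subset_zeroLocus e hL))
    obtain rfl := eq_of_le_of_mem_minimalPrimes hle hp hqp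
    rw [lengthAt_congr e, lengthAt_quotient_self]
    exact ENat.one_lt_top
  · rw [lengthAt_eq_zero_of_quotient_equiv e hqp]
    exact ENat.top_pos

lemma multiplicityFormula_of_notMem [IsNoetherianRing R] {q : PrimeSpectrum R}
    (e : L ≃ₗ[R] R ⧸ q.asIdeal) (hxq : x ∉ q.asIdeal)
    (hL : Module.support R L ⊆ PrimeSpectrum.zeroLocus I)
    (hp : p.asIdeal ∈ (Ideal.span (insert x (I : Set R))).minimalPrimes)
    (hS : ∀ Q, Q ∈ S ↔ Q.asIdeal ∈ I.minimalPrimes) :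
    MultiplicityFormula p x S L := by
  have hreg : IsSMulRegular L x := (e.isSMulRegular_congr x).2 <|
    (isSMulRegular_quotient_iff_mem_of_smul_mem _ _).2 fun _ hy =>
      (q.2.mem_or_mem hy).resolve_left hxq
  have htor := lengthAt_torsionBy_of_isSMulRegular p hreg
  refine ⟨htor ▸ ENat.top_pos, ?_⟩
  rw [htor, zero_add]
  have hIq := le_asIdeal_of_support_subset_zeroLocus e hL
  have hterm : ∀ Q ∈ S, Q ≠ q → lengthAt Q L * lengthAt p (QuotSMulTop x (R ⧸ Q.asIdeal)) = 0 :=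
    fun Q hQ hne => by
      rw [lengthAt_eq_zero_of_quotient_equiv e fun h =>
        hne (eq_of_le_of_mem_minimalPrimes hIq ((hS Q).1 hQ) h).symm, zero_mul]
  by_cases hqS : q ∈ S
  · rw [Finset.sum_eq_single_of_mem q hqS hterm, lengthAt_congr (p := q) e,
      lengthAt_quotient_self, one_mul, lengthAt_congr (QuotSMulTop.congr x e)]
  · rw [Finset.sum_eq_zero fun Q hQ => hterm Q hQ fun h => hqS (h ▸ hQ), ← nonpos_iff_eq_zero]
    have hxp : x ∈ p.asIdeal := hp.1.2 (Ideal.subset_span (Set.mem_insert x _))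
    have hqp : ¬ q ≤ p := fun hqp => hqS <| (hS q).2 <|
      mem_minimalPrimes_of_lt_of_mem_minimalPrimes_span_insert hp hIq <|
        lt_of_le_of_ne hqp fun h => hxq (h ▸ hxp)
    exact (lengthAt_le_of_surjective (Submodule.mkQ_surjective _)).trans
      (lengthAt_eq_zero_of_quotient_equiv e hqp).le

lemma multiplicityFormula_of_exact
    {A : Type*} [AddCommGroup A] [Module R A] {B : Type*} [AddCommGroup B] [Module R B]
    {C : Type*} [AddCommGroup C] [Module R C] {f : A →ₗ[R] B} {g : B →ₗ[R] C}
    (hf : Function.Injective f) (hg : Function.Surjective g) (h : Function.Exact f g)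
    (hA : MultiplicityFormula p x S A) (hC : MultiplicityFormula p x S C) :
    MultiplicityFormula p x S B := by
  have hfin := ENat.add_lt_top.2 ⟨hA.lengthAt_torsionBy_lt_top, hC.lengthAt_torsionBy_lt_top⟩
  refine ⟨(lengthAt_torsionBy_le_add p x hf h).trans_lt hfin, ?_⟩
  apply ENat.add_right_injective_of_ne_top hfin.ne
  simp only [lengthAt_quotSMulTop_add_of_exact p x hf hg h, hA.lengthAt_quotSMulTop_eq,
    hC.lengthAt_quotSMulTop_eq, lengthAt_eq_add_of_exact hf hg h, add_mul, Finset.sum_add_distrib]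
  ring

theorem multiplicityFormula [IsNoetherianRing R] [hfin : Module.Finite R L]
    (hp : p.asIdeal ∈ (Ideal.span (insert x (I : Set R))).minimalPrimes)
    (hS : ∀ Q, Q ∈ S ↔ Q.asIdeal ∈ I.minimalPrimes) (hx : ∀ Q ∈ S, x ∉ Q.asIdeal)
    (hL : Module.support R L ⊆ PrimeSpectrum.zeroLocus I) :
    MultiplicityFormula p x S L := by
  induction hfin using IsNoetherianRing.induction_on_isQuotientEquivQuotientPrime R with
  | subsingleton L =>
    have : Subsingleton (QuotSMulTop x L) := (Submodule.mkQ_surjective _).subsingleton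
    constructor <;> simp [lengthAt_eq_zero_of_subsingleton]
  | quotient L q e =>
    by_cases hxq : x ∈ q.asIdeal
    · exact multiplicityFormula_of_mem e hxq hL hp hx
    · exact multiplicityFormula_of_notMem e hxq hL hp hS
  | exact L₁ L₂ L₃ f g hf hg h ih₁ ih₃ =>
    exact multiplicityFormula_of_exact hf hg h
      (ih₁ ((Module.support_subset_of_injective f hf).trans hL))
      (ih₃ ((Module.support_subset_of_surjective g hg).trans hL))

end MultiplicityFormula

section MinimalLength

variable {R : Type*} [CommRing R] {N : Type*} [AddCommGroup N] [Module R N] [Module.Finite R N]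

lemma minimalPrimes_annihilator_quotSMulTop (x : R) :
    (Module.annihilator R (QuotSMulTop x N)).minimalPrimes =
      (Ideal.span (insert x (Module.annihilator R N : Set R))).minimalPrimes := by
  rw [← Ideal.radical_minimalPrimes, ← (Ideal.span (insert x _)).radical_minimalPrimes]
  congr 1
  rw [← PrimeSpectrum.zeroLocus_eq_iff, ← Module.support_eq_zeroLocus,
    Module.support_quotSMulTop, Module.support_eq_zeroLocus, PrimeSpectrum.zeroLocus_span,
    Set.insert_eq, Set.union_comm, PrimeSpectrum.zeroLocus_union]

variable [IsNoetherianRing R]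

lemma exists_finset_mem_iff_mem_minimalPrimes (I : Ideal R) :
    ∃ S : Finset (PrimeSpectrum R), ∀ Q, Q ∈ S ↔ Q.asIdeal ∈ I.minimalPrimes := by
  have hfin := (Ideal.finite_minimalPrimes_of_isNoetherianRing R I).preimage
    (f := PrimeSpectrum.asIdeal) fun _ _ _ _ => PrimeSpectrum.ext
  exact ⟨hfin.toFinset, fun Q => hfin.mem_toFinset⟩

theorem lengthAt_quotSMulTop_le_of_isSMulRegular {M : Type*} [AddCommGroup M] [Module R M]
    [Module.Finite R M] {x : R} (hx : IsSMulRegular N x)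
    (hM : Module.annihilator R N ≤ Module.annihilator R M)
    (hle : ∀ P : PrimeSpectrum R, P.asIdeal ∈ (Module.annihilator R N).minimalPrimes →
      lengthAt P N ≤ lengthAt P M) (p : PrimeSpectrum R)
    (hp : p.asIdeal ∈ (Module.annihilator R (QuotSMulTop x N)).minimalPrimes) :
    lengthAt p (QuotSMulTop x N) ≤ lengthAt p (QuotSMulTop x M) := by
  obtain ⟨S, hS⟩ := exists_finset_mem_iff_mem_minimalPrimes (Module.annihilator R N)
  rw [minimalPrimes_annihilator_quotSMulTop] at hp
  have hxS : ∀ Q ∈ S, x ∉ Q.asIdeal := fun Q hQ =>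
    hx.notMem_of_mem_minimalPrimes ((hS Q).1 hQ)
  have hNsupp : Module.support R N ⊆ PrimeSpectrum.zeroLocus (Module.annihilator R N) :=
    Module.support_eq_zeroLocus.subset
  have hMsupp : Module.support R M ⊆ PrimeSpectrum.zeroLocus (Module.annihilator R N) :=
    Module.support_eq_zeroLocus.subset.trans (PrimeSpectrum.zeroLocus_anti_mono hM)
  rw [(multiplicityFormula hp hS hxS hNsupp).lengthAt_quotSMulTop_eq,
    (multiplicityFormula hp hS hxS hMsupp).lengthAt_quotSMulTop_eq,
    lengthAt_torsionBy_of_isSMulRegular p hx, zero_add]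
  refine le_add_left (Finset.sum_le_sum fun Q hQ => ?_)
  gcongr
  exact hle Q ((hS Q).1 hQ)

end MinimalLength

section SupportDimZero

variable {R : Type*} [CommRing R] {L : Type*} [AddCommGroup L] [Module R L]

lemma isFiniteLength_of_supportDim_eq_zero [IsNoetherianRing R] [Module.Finite R L]
    (hL : Module.supportDim R L = 0) : IsFiniteLength R L := by
  have : IsArtinianRing (R ⧸ Module.annihilator R L) := by
    rw [isArtinianRing_iff_krullDimLE_zero, Ring.krullDimLE_iff,
      ← Module.supportDim_eq_ringKrullDim_quotient_annihilator, hL]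
    rfl
  let _ := Module.quotientAnnihilator (R := R) (M := L)
  have : Module.Finite (R ⧸ Module.annihilator R L) L := .of_restrictScalars_finite R _ _
  have : IsArtinian R L := isArtinian_of_surjective_algebraMap (S := R)
    (R := R ⧸ Module.annihilator R L) Ideal.Quotient.mk_surjective
  exact isFiniteLength_iff_isNoetherian_isArtinian.2 ⟨inferInstance, inferInstance⟩

variable [IsLocalRing R]

lemma lengthAt_closedPoint : lengthAt (closedPoint R) L = Module.length R L := by
  have hunit : (closedPoint R).asIdeal.primeCompl ≤ IsUnit.submonoid R := fun r hr => by
    by_contra h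
    exact hr ((mem_maximalIdeal r).2 h)
  have hsurj : Function.Surjective
      (algebraMap R (Localization.AtPrime (closedPoint R).asIdeal)) :=
    (IsLocalization.atUnits R _ hunit).surjective
  have := IsLocalization.self hunit
  have := isLocalizedModule_id (closedPoint R).asIdeal.primeCompl L R
  exact ((IsLocalizedModule.linearEquiv (closedPoint R).asIdeal.primeCompl LinearMap.id
    (LocalizedModule.mkLinearMap (closedPoint R).asIdeal.primeCompl L)).length_eq.trans
      (Module.length_eq_of_surjective hsurj)).symm

lemma minimalPrimes_annihilator_of_supportDim_eq_zero [Module.Finite R L]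
    (hL : Module.supportDim R L = 0) :
    (Module.annihilator R L).minimalPrimes = {maximalIdeal R} := by
  have hsupp := support_of_supportDim_eq_zero R L hL
  rw [Module.support_eq_zeroLocus, PrimeSpectrum.zeroLocus_eq_iff] at hsupp
  rw [← Ideal.radical_minimalPrimes, hsupp, Ideal.radical_minimalPrimes,
    Ideal.minimalPrimes_eq_subsingleton_self]

end SupportDimZero

section RegularSequence

variable {R : Type u} [CommRing R] [IsNoetherianRing R] [IsLocalRing R] {Y : ModuleCat.{u} R}

lemma subsingleton_ext_residueField_of_supportDim_eq_zero {N : Type u} [AddCommGroup N]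
    [Module R N] [Module.Finite R N] [Nontrivial N] (hdim : Module.supportDim R N = 0) {n : ℕ}
    (hvan : ∀ i, n < i → Subsingleton (Abelian.Ext (ModuleCat.of R N) Y i))
    (hle : ∀ P : PrimeSpectrum R, P.asIdeal ∈ (Module.annihilator R N).minimalPrimes →
      lengthAt P N ≤ lengthAt P (Abelian.Ext (ModuleCat.of R N) Y n))
    (hk : Module.length R (Abelian.Ext (ModuleCat.of R (ResidueField R)) Y n) ≤ 1)
    (i : ℕ) (hi : n < i) :
    Subsingleton (Abelian.Ext (ModuleCat.of R (ResidueField R)) Y i) := by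
  have hN := isFiniteLength_of_supportDim_eq_zero hdim
  have hlen := hle (closedPoint R)
    ((minimalPrimes_annihilator_of_supportDim_eq_zero hdim).symm ▸ Set.mem_singleton _)
  rw [lengthAt_closedPoint, lengthAt_closedPoint] at hlen
  have := hvan _ n.lt_succ_self
  exact subsingleton_ext_residueField_of_succ hN
    (subsingleton_ext_residueField_succ hN hk hlen) hvan i hi

theorem subsingleton_ext_residueField_of_isRegular [Module.Finite R Y] {rs : List R}
    (hmem : ∀ r ∈ rs, r ∈ maximalIdeal R) {N : Type u} [AddCommGroup N] [Module R N]
    [Module.Finite R N] (hreg : RingTheory.Sequence.IsRegular N rs)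
    (hdim : Module.supportDim R N = rs.length) {j : ℕ}
    (hvan : ∀ i, j < i → Subsingleton (Abelian.Ext (ModuleCat.of R N) Y i))
    (hle : ∀ P : PrimeSpectrum R, P.asIdeal ∈ (Module.annihilator R N).minimalPrimes →
      lengthAt P N ≤ lengthAt P (Abelian.Ext (ModuleCat.of R N) Y j))
    (hk : Module.length R
      (Abelian.Ext (ModuleCat.of R (ResidueField R)) Y (j + rs.length)) ≤ 1)
    (i : ℕ) (hi : j + rs.length < i) :
    Subsingleton (Abelian.Ext (ModuleCat.of R (ResidueField R)) Y i) := by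
  induction rs generalizing N j with
  | nil =>
    have := hreg.nontrivial
    exact subsingleton_ext_residueField_of_supportDim_eq_zero hdim hvan hle hk i hi
  | cons x rs ih =>
    obtain ⟨hx, hreg'⟩ := (RingTheory.Sequence.isRegular_cons_iff N x rs).1 hreg
    have hxm : x ∈ maximalIdeal R := hmem x List.mem_cons_self
    have hdim' : Module.supportDim R (QuotSMulTop x N) = rs.length := by
      have h := Module.supportDim_quotSMulTop_succ_eq_supportDim hx hxm
      rw [hdim, List.length_cons, Nat.cast_succ] at h
      exact ENat.WithBot.add_one_cancel.1 h
    obtain ⟨e⟩ := nonempty_ext_quotSMulTop_equiv (X := ModuleCat.of R N) hx j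
      (hvan _ j.lt_succ_self)
    have hlen : j + (x :: rs).length = j + 1 + rs.length := by
      rw [List.length_cons, add_assoc, add_comm 1]
    rw [hlen] at hk hi
    refine ih (fun r hr => hmem r (List.mem_cons_of_mem x hr)) hreg' hdim'
      (subsingleton_ext_quotSMulTop (X := ModuleCat.of R N) hx hvan) (fun P hP => ?_) hk hi
    rw [← lengthAt_congr e]
    exact lengthAt_quotSMulTop_le_of_isSMulRegular hx
      (annihilator_le_annihilator_ext (ModuleCat.of R N) Y j) hle P hP

end RegularSequence

section DualizingModule

theorem dualizing_of_partial_ext_general (R : Type u) [CommRing R] [IsNoetherianRing R]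
    [IsLocalRing R] (n : ℕ) (hdim : ringKrullDim R = n)
    (hCM : ∀ i < n, Subsingleton (Abelian.Ext (ModuleCat.of R (ResidueField R))
      (ModuleCat.of R R) i))
    (Ω : Type u) [AddCommGroup Ω] [Module R Ω] [Module.Finite R Ω]
    (htop : Module.length R (Abelian.Ext (ModuleCat.of R (ResidueField R))
      (ModuleCat.of R Ω) n) ≤ 1)
    (hmin : ∀ P : PrimeSpectrum R, P.asIdeal ∈ minimalPrimes R → lengthAt P R ≤ lengthAt P Ω)
    (i : ℕ) (hi : n < i) :
    Subsingleton (Abelian.Ext (ModuleCat.of R (ResidueField R)) (ModuleCat.of R Ω) i) := by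
  have hlt : maximalIdeal R • (⊤ : Submodule R R) < ⊤ := by
    simpa [lt_top_iff_ne_top] using (maximalIdeal.isMaximal R).ne_top
  have hsupp : Module.support R (ResidueField R) = PrimeSpectrum.zeroLocus (maximalIdeal R) := by
    rw [Module.support_eq_zeroLocus, show Module.annihilator R (ResidueField R) = maximalIdeal R
      from Ideal.annihilator_quotient]
  obtain ⟨rs, rfl, hmem, hreg⟩ := ModuleCat.exists_isRegular_of_exists_subsingleton_ext
    (maximalIdeal R) n (ModuleCat.of R R) hlt (ModuleCat.of R (ResidueField R)) hsupp hCM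
  refine subsingleton_ext_residueField_of_isRegular (j := 0) hmem hreg
    ((Module.supportDim_self_eq_ringKrullDim R).trans hdim)
    (fun i hi => subsingleton_ext_self _ hi) (fun P hP => ?_)
    ((zero_add rs.length).symm ▸ htop) i ((zero_add rs.length).symm ▸ hi)
  rw [lengthAt_congr (extSelfEquiv (ModuleCat.of R Ω))]
  exact hmin P (by rwa [Module.annihilator_eq_bot.2 inferInstance] at hP)

lemma lengthAt_le_lengthAt_of_locLen_le {R : Type} [CommRing R] {M N : Type} [AddCommGroup M]
    [Module R M] [AddCommGroup N] [Module R N] {P : PrimeSpectrum R}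
    (h : locLen R M P ≤ locLen R N P) : lengthAt P M ≤ lengthAt P N := by
  unfold locLen mlen at h
  rwa [← Module.coe_length, ← Module.coe_length, WithBot.coe_le_coe] at h

/-- The comparison of `extM` with `Ext` as a group of morphisms in the derived category. -/
noncomputable def extMEquiv (R : Type) [CommRing R] (M N : Type) [AddCommGroup M] [Module R M]
    [AddCommGroup N] [Module R N] (n : ℕ) :
    extM R M N n ≃ₗ[R] Abelian.Ext (ModuleCat.of R M) (ModuleCat.of R N) n :=
  derivedExtEquiv _ _ _

lemma subsingleton_extM_iff {R : Type} [CommRing R] {M N : Type} [AddCommGroup M] [Module R M]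
    [AddCommGroup N] [Module R N] {n : ℕ} :
    Subsingleton (extM R M N n) ↔
      Subsingleton (Abelian.Ext (ModuleCat.of R M) (ModuleCat.of R N) n) :=
  (extMEquiv R M N n).toEquiv.subsingleton_congr

lemma length_ext_residueField_of_nonempty_extM_equiv {R : Type} [CommRing R] [IsLocalRing R]
    {N : Type} [AddCommGroup N] [Module R N] {n : ℕ}
    (h : Nonempty (extM R (ResidueField R) N n ≃ₗ[R] ResidueField R)) :
    Module.length R (Abelian.Ext (ModuleCat.of R (ResidueField R)) (ModuleCat.of R N) n) = 1 := by
  obtain ⟨e⟩ := h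
  rw [← (extMEquiv R (ResidueField R) N n).length_eq, e.length_eq, length_residueField]

end DualizingModule

/-- Let `(R, m)` be local CM of dimension `n` with residue field `k`. If a finite module `Ω`
satisfies `Ext^i(k, Ω) = 0` for `i < n`, `Ext^n(k, Ω) ≅ k` and
`length_{R_P}(Ω_P) ≥ length_{R_P}(R_P)` at all minimal primes, then `Ω` is dualizing, i.e.
`Ext^i(k, Ω) = 0` for all `i ≠ n`. -/
theorem dualizing_of_partial_ext (R : Type) [CommRing R] [IsNoetherianRing R] [IsLocalRing R]
    (n : ℕ) (hdim : ringKrullDim R = n)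
    (hCM : ∀ i : ℕ, i < n → Subsingleton (extM R (ResidueField R) R i))
    (Ω : Type) [AddCommGroup Ω] [Module R Ω] [Module.Finite R Ω]
    (hlow : ∀ i : ℕ, i < n → Subsingleton (extM R (ResidueField R) Ω i))
    (htop : Nonempty ((extM R (ResidueField R) Ω n) ≃ₗ[R] ResidueField R))
    (hmin : ∀ P : PrimeSpectrum R, P.asIdeal ∈ minimalPrimes R →
      locLen R R P ≤ locLen R Ω P) :
    ∀ i : ℕ, i ≠ n → Subsingleton (extM R (ResidueField R) Ω i) := by
  intro i hi
  rcases hi.lt_or_gt with hlt | hgt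
  · exact hlow i hlt
  · exact subsingleton_extM_iff.2 <|
      dualizing_of_partial_ext_general R n hdim (fun j hj => subsingleton_extM_iff.1 (hCM j hj)) Ω
        (length_ext_residueField_of_nonempty_extM_equiv htop).le
        (fun P hP => lengthAt_le_lengthAt_of_locLen_le (hmin P hP)) i hgt
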